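/- Let H ∈ (0, 3/4). There exists a constant C_H depending only on H such that for every integer n ≥ 1 and every l ∈ {1,…,n}, Σ_{j=1}^n Σ_{k=1}^n |β_{k,l} · β_{j,l} · β_{j,k}| ≤ C_H · n^{−4H − min(2H, 1)}. -/

import Mathlib

/-- The fBm autocorrelation sequence `ρ_H(k) = (1/2)(|k+1|^{2H} − 2|k|^{2H} + |k−1|^{2H})`. -/
noncomputable def rhoH (H : ℝ) (k : ℤ) : ℝ :=
  (1/2) * (|(k:ℝ) + 1| ^ (2 * H) - 2 * |(k:ℝ)| ^ (2 * H) + |(k:ℝ) - 1| ^ (2 * H))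

/-!
The triple sum is `n ^ (-6H)` times the quadratic form of the kernel `|ρ_H(j - k)|` at the vector
`|ρ_H(j - l)|`, so by the Schur test it is at most `n ^ (-6H)` times the largest row sum of the
kernel times `∑ ρ_H(m) ^ 2`.

For `k ≠ 0`, `ρ_H(k) = |k| ^ (2H) * ((1 + 1/k) ^ (2H) + (1 - 1/k) ^ (2H) - 2) / 2`, and Bernoulli's
inequality shows that `ρ_H` has constant sign off `0` and that
`|ρ_H(k)| ≤ |2H - 1| * |k| ^ (2H - 2)`. By this decay `ρ_H` is square summable when `4H - 4 < -1`,
that is `H < 3/4`; by the constant sign the row sums telescope, which bounds them by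
`2 n ^ (2H - min (2H) 1)`.
-/

section SchurTest

theorem abs_mul_mul_le_half_sq_add_sq (x y z : ℝ) :
    |x * z * y| ≤ (|z| * x ^ 2 + |z| * y ^ 2) / 2 := by
  rw [abs_mul, abs_mul, ← sq_abs x, ← sq_abs y]
  nlinarith [mul_nonneg (abs_nonneg z) (sq_nonneg (|x| - |y|))]

theorem sum_sum_abs_mul_mul_le_of_row_col_sum_le {ι κ : Type*} {s : Finset ι} {t : Finset κ}
    {K : ι → κ → ℝ} {R C : ℝ} (hrow : ∀ i ∈ s, ∑ j ∈ t, |K i j| ≤ R)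
    (hcol : ∀ j ∈ t, ∑ i ∈ s, |K i j| ≤ C) (a : ι → ℝ) (b : κ → ℝ) :
    ∑ i ∈ s, ∑ j ∈ t, |a i * K i j * b j| ≤
      (R * ∑ i ∈ s, a i ^ 2 + C * ∑ j ∈ t, b j ^ 2) / 2 := by
  have row : ∑ i ∈ s, ∑ j ∈ t, |K i j| * a i ^ 2 ≤ R * ∑ i ∈ s, a i ^ 2 := by
    simp_rw [← Finset.sum_mul, Finset.mul_sum]
    gcongr with i hi
    exact hrow i hi
  have col : ∑ i ∈ s, ∑ j ∈ t, |K i j| * b j ^ 2 ≤ C * ∑ j ∈ t, b j ^ 2 := by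
    rw [Finset.sum_comm]
    simp_rw [← Finset.sum_mul, Finset.mul_sum]
    gcongr with j hj
    exact hcol j hj
  calc ∑ i ∈ s, ∑ j ∈ t, |a i * K i j * b j|
      ≤ ∑ i ∈ s, ∑ j ∈ t, (|K i j| * a i ^ 2 + |K i j| * b j ^ 2) / 2 := by
        gcongr
        exact abs_mul_mul_le_half_sq_add_sq _ _ _
    _ = (∑ i ∈ s, ∑ j ∈ t, |K i j| * a i ^ 2 + ∑ i ∈ s, ∑ j ∈ t, |K i j| * b j ^ 2) / 2 := by
        simp_rw [← Finset.sum_div, Finset.sum_add_distrib]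
    _ ≤ (R * ∑ i ∈ s, a i ^ 2 + C * ∑ j ∈ t, b j ^ 2) / 2 := by gcongr

end SchurTest

section TranslatedSums

variable {f : ℤ → ℝ}

theorem sum_Icc_sub_le_sum_Icc_neg (hf : ∀ m, 0 ≤ f m) {N k : ℕ} (hk : k ∈ Finset.Icc 1 (N + 1)) :
    ∑ j ∈ Finset.Icc 1 (N + 1), f ((j : ℤ) - k) ≤ ∑ m ∈ Finset.Icc (-N : ℤ) N, f m := by
  have hinj : Set.InjOn (fun j : ℕ ↦ (j : ℤ) - k) (Finset.Icc 1 (N + 1)) := fun i _ j _ h ↦ by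
    simpa using h
  rw [← Finset.sum_image hinj]
  refine Finset.sum_le_sum_of_subset_of_nonneg (fun m hm ↦ ?_) fun m _ _ ↦ hf m
  obtain ⟨j, hj, rfl⟩ := Finset.mem_image.mp hm
  simp only [Finset.mem_Icc] at hj hk ⊢
  omega

theorem sum_natCast_sub_le_tsum (hf : ∀ m, 0 ≤ f m) (hsum : Summable f) (s : Finset ℕ) (l : ℤ) :
    ∑ j ∈ s, f ((j : ℤ) - l) ≤ ∑' m, f m := by
  have hinj : Function.Injective fun j : ℕ ↦ (j : ℤ) - l := fun i j h ↦ by simpa using h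
  exact ((hsum.comp_injective hinj).sum_le_tsum s fun _ _ ↦ hf _).trans
    (tsum_comp_le_tsum_of_inj hsum hf hinj)

end TranslatedSums

section Bernoulli

variable {p s : ℝ}

theorem one_add_rpow_le_one_add_mul_one_add_mul (hp1 : 1 ≤ p) (hp2 : p ≤ 2) (hs : -1 ≤ s) :
    (1 + s) ^ p ≤ (1 + s) * (1 + (p - 1) * s) := by
  have hs0 : 0 ≤ 1 + s := by linarith
  calc (1 + s) ^ p = (1 + s) * (1 + s) ^ (p - 1) := by
        rw [← Real.rpow_one_add' hs0 (by linarith), add_sub_cancel]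
    _ ≤ (1 + s) * (1 + (p - 1) * s) := by
        gcongr
        exact rpow_one_add_le_one_add_mul_self hs (by linarith) (by linarith)

theorem one_add_mul_one_add_mul_le_one_add_rpow (hp0 : 0 < p) (hp1 : p ≤ 1) (hs : -1 ≤ s) :
    (1 + s) * (1 + (p - 1) * s) ≤ (1 + s) ^ p := by
  have hs0 : 0 ≤ 1 + s := by linarith
  have hpos : 0 < 1 + (1 - p) * s := by nlinarith
  have bernoulli : (1 + s) ^ (1 - p) ≤ 1 + (1 - p) * s :=
    rpow_one_add_le_one_add_mul_self hs (by linarith) (by linarith)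
  refine le_of_mul_le_mul_right ?_ hpos
  calc (1 + s) * (1 + (p - 1) * s) * (1 + (1 - p) * s)
      = (1 + s) * (1 - ((1 - p) * s) ^ 2) := by ring
    _ ≤ 1 + s := mul_le_of_le_one_right hs0 (sub_le_self _ (sq_nonneg _))
    _ = (1 + s) ^ p * (1 + s) ^ (1 - p) := by
        rw [← Real.rpow_add' hs0 (by simp), add_sub_cancel, Real.rpow_one]
    _ ≤ (1 + s) ^ p * (1 + (1 - p) * s) := by gcongr

theorem two_le_one_add_rpow_add_one_sub_rpow (hp : 1 ≤ p) (hs : |s| ≤ 1) :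
    2 ≤ (1 + s) ^ p + (1 - s) ^ p := by
  obtain ⟨hs1, hs2⟩ := abs_le.mp hs
  have hplus := one_add_mul_self_le_rpow_one_add hs1 hp
  have hminus := one_add_mul_self_le_rpow_one_add (neg_le_neg hs2) hp
  rw [← sub_eq_add_neg] at hminus
  linarith

theorem one_add_rpow_add_one_sub_rpow_le_two (hp0 : 0 ≤ p) (hp1 : p ≤ 1) (hs : |s| ≤ 1) :
    (1 + s) ^ p + (1 - s) ^ p ≤ 2 := by
  obtain ⟨hs1, hs2⟩ := abs_le.mp hs
  have hplus := rpow_one_add_le_one_add_mul_self hs1 hp0 hp1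
  have hminus := rpow_one_add_le_one_add_mul_self (neg_le_neg hs2) hp0 hp1
  rw [← sub_eq_add_neg] at hminus
  linarith

theorem abs_one_add_rpow_add_one_sub_rpow_sub_two_le (hp0 : 0 < p) (hp2 : p ≤ 2) (hs : |s| ≤ 1) :
    |(1 + s) ^ p + (1 - s) ^ p - 2| ≤ 2 * |p - 1| * s ^ 2 := by
  obtain ⟨hs1, hs2⟩ := abs_le.mp hs
  rcases le_total 1 p with hp | hp
  · have hplus := one_add_rpow_le_one_add_mul_one_add_mul hp hp2 hs1
    have hminus := one_add_rpow_le_one_add_mul_one_add_mul hp hp2 (neg_le_neg hs2)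
    rw [← sub_eq_add_neg] at hminus
    rw [abs_of_nonneg (sub_nonneg.mpr (two_le_one_add_rpow_add_one_sub_rpow hp hs)),
      abs_of_nonneg (sub_nonneg.mpr hp)]
    linarith
  · have hplus := one_add_mul_one_add_mul_le_one_add_rpow hp0 hp hs1
    have hminus := one_add_mul_one_add_mul_le_one_add_rpow hp0 hp (neg_le_neg hs2)
    rw [← sub_eq_add_neg] at hminus
    rw [abs_of_nonpos (sub_nonpos.mpr (one_add_rpow_add_one_sub_rpow_le_two hp0.le hp hs)),
      abs_of_nonpos (sub_nonpos.mpr hp)]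
    linarith

theorem rpow_sub_rpow_le_mul_sub {x y : ℝ} (hx : 0 < x) (hy : 0 ≤ y) (hp : 1 ≤ p) :
    x ^ p - y ^ p ≤ p * x ^ (p - 1) * (x - y) := by
  have hs : -1 ≤ y / x - 1 := by linarith [div_nonneg hy hx.le]
  have tangent := one_add_mul_self_le_rpow_one_add hs hp
  rw [add_sub_cancel, Real.div_rpow hy hx.le, le_div_iff₀ (by positivity)] at tangent
  calc x ^ p - y ^ p ≤ x ^ p - (1 + p * (y / x - 1)) * x ^ p := by gcongr
    _ = p * x ^ (p - 1) * (x - y) := by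
        rw [Real.rpow_sub_one hx.ne']
        field_simp
        ring

end Bernoulli

section Autocorrelation

variable {H : ℝ}

theorem rhoH_even (H : ℝ) : (rhoH H).Even := fun k ↦ by
  have hplus : |-(k : ℝ) + 1| = |(k : ℝ) - 1| := by rw [neg_add_eq_sub, abs_sub_comm]
  have hminus : |-(k : ℝ) - 1| = |(k : ℝ) + 1| := by rw [← neg_add', abs_neg]
  simp only [rhoH, Int.cast_neg, abs_neg, hplus, hminus]
  ring

theorem rhoH_sub_comm (H : ℝ) (j k : ℤ) : rhoH H (j - k) = rhoH H (k - j) := by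
  rw [← rhoH_even, neg_sub]

theorem rhoH_zero (hH : H ≠ 0) : rhoH H 0 = 1 := by
  norm_num [rhoH, Real.zero_rpow (mul_ne_zero two_ne_zero hH)]

theorem abs_inv_intCast_le_one (k : ℤ) : |(k : ℝ)⁻¹| ≤ 1 := by
  rw [abs_inv, ← Int.cast_abs, Int.abs_eq_natAbs, Int.cast_natCast]
  exact Nat.cast_inv_le_one _

theorem rhoH_eq_rpow_mul {k : ℤ} (hk : k ≠ 0) :
    rhoH H k = |(k : ℝ)| ^ (2 * H) / 2 *
      ((1 + (k : ℝ)⁻¹) ^ (2 * H) + (1 - (k : ℝ)⁻¹) ^ (2 * H) - 2) := by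
  have hk' : (k : ℝ) ≠ 0 := Int.cast_ne_zero.mpr hk
  obtain ⟨hlow, hup⟩ := abs_le.mp (abs_inv_intCast_le_one k)
  have hplus : |(k : ℝ) + 1| = |(k : ℝ)| * (1 + (k : ℝ)⁻¹) := by
    rw [← abs_of_nonneg (by linarith : 0 ≤ 1 + (k : ℝ)⁻¹), ← abs_mul, mul_add, mul_one,
      mul_inv_cancel₀ hk']
  have hminus : |(k : ℝ) - 1| = |(k : ℝ)| * (1 - (k : ℝ)⁻¹) := by
    rw [← abs_of_nonneg (by linarith : 0 ≤ 1 - (k : ℝ)⁻¹), ← abs_mul, mul_sub, mul_one,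
      mul_inv_cancel₀ hk']
  rw [rhoH, hplus, hminus, Real.mul_rpow (abs_nonneg _) (by linarith),
    Real.mul_rpow (abs_nonneg _) (by linarith)]
  ring

theorem rhoH_nonneg_of_ne_zero (hH : 1 / 2 ≤ H) {k : ℤ} (hk : k ≠ 0) : 0 ≤ rhoH H k := by
  rw [rhoH_eq_rpow_mul hk]
  have := two_le_one_add_rpow_add_one_sub_rpow (by linarith : 1 ≤ 2 * H) (abs_inv_intCast_le_one k)
  exact mul_nonneg (by positivity) (sub_nonneg.mpr this)

theorem rhoH_nonpos_of_ne_zero (hH0 : 0 ≤ H) (hH : H ≤ 1 / 2) {k : ℤ} (hk : k ≠ 0) :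
    rhoH H k ≤ 0 := by
  rw [rhoH_eq_rpow_mul hk]
  have := one_add_rpow_add_one_sub_rpow_le_two (by linarith : 0 ≤ 2 * H) (by linarith)
    (abs_inv_intCast_le_one k)
  exact mul_nonpos_of_nonneg_of_nonpos (by positivity) (sub_nonpos.mpr this)

theorem abs_rhoH_le_rpow (hH0 : 0 < H) (hH1 : H ≤ 1) {k : ℤ} (hk : k ≠ 0) :
    |rhoH H k| ≤ |2 * H - 1| * |(k : ℝ)| ^ (2 * H - 2) := by
  have hk' : (k : ℝ) ≠ 0 := Int.cast_ne_zero.mpr hk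
  have hbound := abs_one_add_rpow_add_one_sub_rpow_sub_two_le (by linarith : 0 < 2 * H)
    (by linarith) (abs_inv_intCast_le_one k)
  rw [rhoH_eq_rpow_mul hk, abs_mul, abs_of_nonneg (by positivity)]
  calc |(k : ℝ)| ^ (2 * H) / 2 * |(1 + (k : ℝ)⁻¹) ^ (2 * H) + (1 - (k : ℝ)⁻¹) ^ (2 * H) - 2|
      ≤ |(k : ℝ)| ^ (2 * H) / 2 * (2 * |2 * H - 1| * (k : ℝ)⁻¹ ^ 2) := by gcongr
    _ = |2 * H - 1| * |(k : ℝ)| ^ (2 * H - 2) := by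
        rw [Real.rpow_sub (abs_pos.mpr hk'), Real.rpow_two, sq_abs]
        ring

theorem summable_rhoH_sq (hH0 : 0 < H) (hH : H < 3 / 4) : Summable fun k ↦ rhoH H k ^ 2 := by
  have hsum : Summable fun k : ℤ ↦ (2 * H - 1) ^ 2 * |(k : ℝ)| ^ (-(4 - 4 * H)) :=
    (Real.summable_abs_int_rpow (by linarith)).mul_left _
  refine hsum.of_norm_bounded_eventually ?_
  filter_upwards [Filter.eventually_cofinite_ne 0] with k hk
  calc ‖rhoH H k ^ 2‖ = |rhoH H k| ^ 2 := by rw [norm_pow, Real.norm_eq_abs]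
    _ ≤ (|2 * H - 1| * |(k : ℝ)| ^ (2 * H - 2)) ^ 2 := by
        gcongr
        exact abs_rhoH_le_rpow hH0 (by linarith) hk
    _ = (2 * H - 1) ^ 2 * |(k : ℝ)| ^ (-(4 - 4 * H)) := by
        rw [mul_pow, sq_abs, ← Real.rpow_mul_natCast (abs_nonneg _)]
        congr 2
        push_cast
        ring

theorem sum_range_rhoH_succ (hH : H ≠ 0) (N : ℕ) :
    ∑ m ∈ Finset.range N, rhoH H (m + 1) =
      (((N : ℝ) + 1) ^ (2 * H) - (N : ℝ) ^ (2 * H) - 1) / 2 := by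
  induction N with
  | zero => simp [Real.zero_rpow (mul_ne_zero two_ne_zero hH)]
  | succ N ih =>
    have hrho : rhoH H (N + 1) = 1 / 2 *
        (((N : ℝ) + 1 + 1) ^ (2 * H) - 2 * ((N : ℝ) + 1) ^ (2 * H) + (N : ℝ) ^ (2 * H)) := by
      rw [rhoH]
      push_cast
      rw [add_sub_cancel_right, abs_of_nonneg (by positivity), abs_of_nonneg (by positivity),
        abs_of_nonneg (by positivity)]
    rw [Finset.sum_range_succ, ih, hrho]
    push_cast
    ring

theorem sum_range_abs_rhoH_succ (hH : 0 ≤ H) (N : ℕ) :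
    ∑ m ∈ Finset.range N, |rhoH H (m + 1)| = |∑ m ∈ Finset.range N, rhoH H (m + 1)| := by
  have hne (m : ℕ) : (m : ℤ) + 1 ≠ 0 := by omega
  rcases le_total (1 / 2) H with h | h
  · have hnonneg (m : ℕ) : 0 ≤ rhoH H (m + 1) := rhoH_nonneg_of_ne_zero h (hne m)
    simp_rw [Finset.abs_sum_of_nonneg' hnonneg, abs_of_nonneg (hnonneg _)]
  · have hnonpos (m : ℕ) : rhoH H (m + 1) ≤ 0 := rhoH_nonpos_of_ne_zero hH h (hne m)
    simp_rw [abs_of_nonpos (Finset.sum_nonpos fun m _ ↦ hnonpos m), abs_of_nonpos (hnonpos _),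
      Finset.sum_neg_distrib]

theorem sum_Icc_neg_abs_rhoH (hH : 0 < H) (N : ℕ) :
    ∑ m ∈ Finset.Icc (-N : ℤ) N, |rhoH H m| =
      1 + |((N : ℝ) + 1) ^ (2 * H) - (N : ℝ) ^ (2 * H) - 1| := by
  have heven : (fun m ↦ |rhoH H m|).Even := fun m ↦ congrArg abs (rhoH_even H m)
  rw [Finset.sum_Icc_of_even_eq_range heven, Finset.sum_range_succ']
  simp only [Nat.cast_add, Nat.cast_one, Nat.cast_zero]
  rw [sum_range_abs_rhoH_succ hH.le, sum_range_rhoH_succ hH.ne', rhoH_zero hH.ne', abs_div,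
    abs_one, abs_two]
  ring

theorem sum_Icc_neg_abs_rhoH_le (hH0 : 0 < H) (hH1 : H ≤ 1) (N : ℕ) :
    ∑ m ∈ Finset.Icc (-N : ℤ) N, |rhoH H m| ≤ 2 * ((N : ℝ) + 1) ^ (2 * H - min (2 * H) 1) := by
  have hN : (0 : ℝ) ≤ N := N.cast_nonneg
  rw [sum_Icc_neg_abs_rhoH hH0]
  rcases le_total (2 * H) 1 with h | h
  · have subadditive : ((N : ℝ) + 1) ^ (2 * H) ≤ (N : ℝ) ^ (2 * H) + 1 := by
      simpa using Real.rpow_add_le_add_rpow hN zero_le_one (by linarith) h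
    have mono : (N : ℝ) ^ (2 * H) ≤ ((N : ℝ) + 1) ^ (2 * H) := by gcongr; linarith
    rw [min_eq_left h, sub_self, Real.rpow_zero, abs_of_nonpos (by linarith)]
    linarith
  · have superadditive : (N : ℝ) ^ (2 * H) + 1 ≤ ((N : ℝ) + 1) ^ (2 * H) := by
      simpa using Real.add_rpow_le_rpow_add hN zero_le_one h
    rw [min_eq_right h, abs_of_nonneg (by linarith)]
    calc 1 + (((N : ℝ) + 1) ^ (2 * H) - (N : ℝ) ^ (2 * H) - 1)
        = ((N : ℝ) + 1) ^ (2 * H) - (N : ℝ) ^ (2 * H) := by ring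
      _ ≤ 2 * H * ((N : ℝ) + 1) ^ (2 * H - 1) * ((N : ℝ) + 1 - N) :=
          rpow_sub_rpow_le_mul_sub (by positivity) hN h
      _ = 2 * H * ((N : ℝ) + 1) ^ (2 * H - 1) := by ring
      _ ≤ 2 * ((N : ℝ) + 1) ^ (2 * H - 1) := by gcongr; linarith

theorem sum_Icc_abs_rhoH_sub_le (hH0 : 0 < H) (hH1 : H ≤ 1) {n k : ℕ}
    (hk : k ∈ Finset.Icc 1 n) :
    ∑ j ∈ Finset.Icc 1 n, |rhoH H ((j : ℤ) - k)| ≤ 2 * (n : ℝ) ^ (2 * H - min (2 * H) 1) := by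
  obtain ⟨N, rfl⟩ : ∃ N, n = N + 1 := Nat.exists_eq_succ_of_ne_zero (by grind)
  rw [Nat.cast_add_one]
  exact (sum_Icc_sub_le_sum_Icc_neg (fun m ↦ abs_nonneg (rhoH H m)) hk).trans
    (sum_Icc_neg_abs_rhoH_le hH0 hH1 N)

theorem sum_sum_abs_rhoH_mul_rhoH_mul_rhoH_le (hH0 : 0 < H) (hH : H < 3 / 4) (n : ℕ) (l : ℤ) :
    ∑ j ∈ Finset.Icc 1 n, ∑ k ∈ Finset.Icc 1 n,
        |rhoH H (j - l) * rhoH H ((j : ℤ) - k) * rhoH H (k - l)| ≤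
      2 * (n : ℝ) ^ (2 * H - min (2 * H) 1) * ∑' m, rhoH H m ^ 2 := by
  have col (k) (hk : k ∈ Finset.Icc 1 n) :=
    sum_Icc_abs_rhoH_sub_le hH0 (hH.le.trans (by norm_num)) hk
  have row (j) (hj : j ∈ Finset.Icc 1 n) :
      ∑ k ∈ Finset.Icc 1 n, |rhoH H ((j : ℤ) - k)| ≤ 2 * (n : ℝ) ^ (2 * H - min (2 * H) 1) := by
    simpa only [rhoH_sub_comm H j] using col j hj
  have sq_sum : ∑ j ∈ Finset.Icc 1 n, rhoH H (j - l) ^ 2 ≤ ∑' m, rhoH H m ^ 2 :=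
    sum_natCast_sub_le_tsum (fun _ ↦ sq_nonneg _) (summable_rhoH_sq hH0 hH) _ l
  refine (sum_sum_abs_mul_mul_le_of_row_col_sum_le row col (fun j ↦ rhoH H (j - l))
    fun k ↦ rhoH H (k - l)).trans ?_
  rw [add_self_div_two]
  gcongr

end Autocorrelation

theorem stmt12_general (H : ℝ) (hH : H ∈ Set.Ioo (0 : ℝ) (3 / 4)) :
    ∃ C : ℝ, 0 < C ∧ ∀ n : ℕ, 1 ≤ n → ∀ l : ℤ,
      ∑ j ∈ Finset.Icc 1 n, ∑ k ∈ Finset.Icc 1 n,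
          |((n : ℝ) ^ (-(2 * H)) * rhoH H (k - l))
            * ((n : ℝ) ^ (-(2 * H)) * rhoH H (j - l))
            * ((n : ℝ) ^ (-(2 * H)) * rhoH H ((j : ℤ) - k))| ≤
        C * (n : ℝ) ^ (-(4 * H) - min (2 * H) 1) := by
  obtain ⟨hH0, hH34⟩ := hH
  have hS : 0 < ∑' m, rhoH H m ^ 2 :=
    (summable_rhoH_sq hH0 hH34).tsum_pos (fun _ ↦ sq_nonneg _) 0 (by simp [rhoH_zero hH0.ne'])
  refine ⟨2 * ∑' m, rhoH H m ^ 2, by positivity, fun n hn l ↦ ?_⟩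
  have hn0 : (0 : ℝ) < n := Nat.cast_pos.mpr hn
  set c : ℝ := (n : ℝ) ^ (-(2 * H)) with hc
  have hscale : c ^ 3 * (n : ℝ) ^ (2 * H - min (2 * H) 1) =
      (n : ℝ) ^ (-(4 * H) - min (2 * H) 1) := by
    rw [hc, ← Real.rpow_mul_natCast hn0.le, ← Real.rpow_add hn0]
    congr 1
    push_cast
    ring
  have hfactor (x y z : ℝ) : |c * x * (c * y) * (c * z)| = c ^ 3 * |y * z * x| := by
    rw [← abs_of_nonneg (by positivity : 0 ≤ c ^ 3), ← abs_mul]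
    ring_nf
  simp_rw [hfactor, ← Finset.mul_sum]
  calc _ ≤ c ^ 3 * (2 * (n : ℝ) ^ (2 * H - min (2 * H) 1) * ∑' m, rhoH H m ^ 2) := by
        gcongr
        exact sum_sum_abs_rhoH_mul_rhoH_mul_rhoH_le hH0 hH34 n l
    _ = _ := by rw [← hscale]; ring

/-- Lemma 8 (f): for `H ∈ (0,3/4)` there is a constant `C_H` such that for all `n ≥ 1` and
`l ∈ {1,…,n}`, `Σ_{j,k=1}^n |β_{k,l}·β_{j,l}·β_{j,k}| ≤ C_H · n^{−4H−min(2H,1)}`,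
where `β_{j,k} = n^{−2H} ρ_H(j−k)`. -/
theorem stmt12 (H : ℝ) (hH : H ∈ Set.Ioo (0:ℝ) (3/4)) :
    ∃ C : ℝ, 0 < C ∧ ∀ n : ℕ, 1 ≤ n → ∀ l : ℕ, 1 ≤ l → l ≤ n →
      (∑ j ∈ Finset.Icc 1 n, ∑ k ∈ Finset.Icc 1 n,
          |((n:ℝ) ^ (-(2 * H)) * rhoH H ((k:ℤ) - (l:ℤ)))
            * ((n:ℝ) ^ (-(2 * H)) * rhoH H ((j:ℤ) - (l:ℤ)))
            * ((n:ℝ) ^ (-(2 * H)) * rhoH H ((j:ℤ) - (k:ℤ)))|)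
        ≤ C * (n:ℝ) ^ (-(4 * H) - min (2 * H) 1) := by
  obtain ⟨C, hC, h⟩ := stmt12_general H hH
  exact ⟨C, hC, fun n hn l _ _ ↦ h n hn l⟩
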